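/- arXiv:2406.08847 — 4 statements merged into one kernel-verified Lean document; each statement's English description precedes it below -/
import Mathlib

section
/- Let A, B ∈ ℝ^{𝒜_1×𝒜_2} be payoff matrices of a two-player general-sum game with A + B ≤ 0 entrywise. Define r̲ = (A+B)/2, r̄ = −(A+B)/2, nominal payoff r* = (A−B)/2, and uncertainty sets ℛ_1 = {R ∈ ℝ^{𝒜_1×𝒜_2} : r̲ ≤ R ≤ r̄ entrywise} and ℛ_2 = −ℛ_1. Then for every (π_1, π_2) ∈ Δ(𝒜_1)×Δ(𝒜_2), the robust suboptimality gap of the two-player zero-sum robust matrix game (r*, ℛ_1, ℛ_2) equals the Nash gap of (A, B): [max_{π_1'} V_1(π_1',π_2) − V_1(π_1,π_2)] + [max_{π_2'} V_2(π_1,π_2') − V_2(π_1,π_2)] = [max_{π_1'} π_1'ᵀAπ_2 − π_1ᵀAπ_2] + [max_{π_2'} π_1ᵀBπ_2' − π_1ᵀBπ_2]. Consequently, (π_1, π_2) is a robust Nash equilibrium of the zero-sum robust game if and only if (π_1, π_2) is a Nash equilibrium of the general-sum game (A, B), i.e., π_1ᵀAπ_2 = max_{π_1'} π_1'ᵀAπ_2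 and π_1ᵀBπ_2 = max_{π_2'} π_1ᵀBπ_2'. -/
/-!
The infimum of a payoff that is bilinear in nonnegative policies over an entrywise interval of
perturbations is attained at the entrywise least perturbation (`sInf_bil_eq_of_isLeast`). Player 1's
least perturbation is `r̲`, and `r* + r̲ = A`; player 2's is `-r̄`, and `-r* - r̄ = B`. Hence
`V1 = bil A` and `V2 = bil B` on the simplices, and both claims follow by rewriting the robust
values. The hypothesis `A + B ≤ 0` is what makes `r̲ ≤ r̄`, so that the least perturbation
belongs to the uncertainty set.
-/

open scoped Pointwise

open scoped BigOperators

/-- The probability simplex `Δ(T)` over a finite set `T`. -/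
def probSimplex (T : Type*) [Fintype T] : Set (T → ℝ) :=
  {x | (∀ t, 0 ≤ x t) ∧ ∑ t, x t = 1}

/-- The bilinear form `π_1ᵀ M π_2 = Σ_{a_1,a_2} π_1(a_1) M(a_1,a_2) π_2(a_2)`. -/
noncomputable def bil {A1 A2 : Type*} [Fintype A1] [Fintype A2]
    (M : Matrix A1 A2 ℝ) (π1 : A1 → ℝ) (π2 : A2 → ℝ) : ℝ :=
  ∑ a1, ∑ a2, π1 a1 * M a1 a2 * π2 a2

/-- Player 1's robust value in the two-player zero-sum robust matrix game:
`V_1(π_1,π_2) = inf_{x ∈ ℛ_1} π_1ᵀ (r* + x) π_2`. -/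
noncomputable def V1 {A1 A2 : Type*} [Fintype A1] [Fintype A2]
    (rstar : Matrix A1 A2 ℝ) (R1 : Set (Matrix A1 A2 ℝ))
    (π1 : A1 → ℝ) (π2 : A2 → ℝ) : ℝ :=
  sInf {t : ℝ | ∃ x ∈ R1, t = bil (rstar + x) π1 π2}

/-- Player 2's robust value in the two-player zero-sum robust matrix game:
`V_2(π_1,π_2) = inf_{x ∈ ℛ_2} π_1ᵀ (−r* + x) π_2`. -/
noncomputable def V2 {A1 A2 : Type*} [Fintype A1] [Fintype A2]
    (rstar : Matrix A1 A2 ℝ) (R2 : Set (Matrix A1 A2 ℝ))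
    (π1 : A1 → ℝ) (π2 : A2 → ℝ) : ℝ :=
  sInf {t : ℝ | ∃ x ∈ R2, t = bil (-rstar + x) π1 π2}


lemma bil_mono {A1 A2 : Type*} [Fintype A1] [Fintype A2] {M N : Matrix A1 A2 ℝ}
    (h : ∀ a1 a2, M a1 a2 ≤ N a1 a2) {π1 : A1 → ℝ} {π2 : A2 → ℝ}
    (h1 : ∀ a, 0 ≤ π1 a) (h2 : ∀ a, 0 ≤ π2 a) : bil M π1 π2 ≤ bil N π1 π2 :=
  Finset.sum_le_sum fun a1 _ => Finset.sum_le_sum fun a2 _ =>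
    mul_le_mul_of_nonneg_right (mul_le_mul_of_nonneg_left (h a1 a2) (h1 a1)) (h2 a2)

/-- If `S` has an entrywise least element `L`, the worst case over `S` of the perturbed payoff
`M + x` is attained at `L`, for all nonnegative policies. -/
lemma sInf_bil_eq_of_isLeast {A1 A2 : Type*} [Fintype A1] [Fintype A2]
    (M L : Matrix A1 A2 ℝ) {S : Set (Matrix A1 A2 ℝ)} (hL : L ∈ S)
    (hmin : ∀ x ∈ S, ∀ a1 a2, L a1 a2 ≤ x a1 a2) {π1 : A1 → ℝ} {π2 : A2 → ℝ}
    (h1 : ∀ a, 0 ≤ π1 a) (h2 : ∀ a, 0 ≤ π2 a) :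
    sInf {t : ℝ | ∃ x ∈ S, t = bil (M + x) π1 π2} = bil (M + L) π1 π2 := by
  refine IsLeast.csInf_eq ⟨⟨L, hL, rfl⟩, ?_⟩
  rintro _ ⟨x, hx, rfl⟩
  refine bil_mono (fun a1 a2 => ?_) h1 h2
  simpa using hmin x hx a1 a2

/-- Theorem (hardness reduction): for a general-sum game `(A,B)` with
`A + B ≤ 0`, setting `r̲ = (A+B)/2`, `r̄ = −(A+B)/2`, `r* = (A−B)/2`,
`ℛ_1 = {R : r̲ ≤ R ≤ r̄}`, `ℛ_2 = −ℛ_1`, the robust suboptimality gap of the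
two-player zero-sum robust matrix game `(r*, ℛ_1, ℛ_2)` equals the Nash gap
of `(A,B)` at every `(π_1,π_2) ∈ Δ(𝒜_1)×Δ(𝒜_2)`, and consequently
`(π_1,π_2)` is a robust Nash equilibrium of the zero-sum robust game iff it
is a Nash equilibrium of `(A,B)`. -/
theorem zero_sum_robust_reduction {A1 A2 : Type*} [Fintype A1] [Fintype A2]
    (Amat Bmat rlo rhi rstar : Matrix A1 A2 ℝ)
    (hAB : ∀ a1 a2, Amat a1 a2 + Bmat a1 a2 ≤ 0)
    (hlo : ∀ a1 a2, rlo a1 a2 = (Amat a1 a2 + Bmat a1 a2) / 2)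
    (hhi : ∀ a1 a2, rhi a1 a2 = -((Amat a1 a2 + Bmat a1 a2) / 2))
    (hstar : ∀ a1 a2, rstar a1 a2 = (Amat a1 a2 - Bmat a1 a2) / 2)
    (R1 R2 : Set (Matrix A1 A2 ℝ))
    (hR1 : R1 = {R | ∀ a1 a2, rlo a1 a2 ≤ R a1 a2 ∧ R a1 a2 ≤ rhi a1 a2})
    (hR2 : R2 = -R1)
    (π1 : A1 → ℝ) (π2 : A2 → ℝ)
    (hπ1 : π1 ∈ probSimplex A1) (hπ2 : π2 ∈ probSimplex A2) :
    ((sSup {t : ℝ | ∃ u ∈ probSimplex A1, t = V1 rstar R1 u π2}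
        - V1 rstar R1 π1 π2)
      + (sSup {t : ℝ | ∃ u ∈ probSimplex A2, t = V2 rstar R2 π1 u}
        - V2 rstar R2 π1 π2)
      = (sSup {t : ℝ | ∃ u ∈ probSimplex A1, t = bil Amat u π2}
          - bil Amat π1 π2)
        + (sSup {t : ℝ | ∃ u ∈ probSimplex A2, t = bil Bmat π1 u}
          - bil Bmat π1 π2)) ∧
    ((V1 rstar R1 π1 π2
        = sSup {t : ℝ | ∃ u ∈ probSimplex A1, t = V1 rstar R1 u π2} ∧
      V2 rstar R2 π1 π2
        = sSup {t : ℝ | ∃ u ∈ probSimplex A2, t = V2 rstar R2 π1 u}) ↔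
     (bil Amat π1 π2
        = sSup {t : ℝ | ∃ u ∈ probSimplex A1, t = bil Amat u π2} ∧
      bil Bmat π1 π2
        = sSup {t : ℝ | ∃ u ∈ probSimplex A2, t = bil Bmat π1 u})) := by
  have key1 : ∀ u ∈ probSimplex A1, V1 rstar R1 u π2 = bil Amat u π2 := by
    intro u hu
    have hA : rstar + rlo = Amat := by
      ext a1 a2
      rw [Matrix.add_apply, hstar, hlo]
      ring
    rw [V1, sInf_bil_eq_of_isLeast rstar rlo ?_ ?_ hu.1 hπ2.1, hA]
    · rw [hR1]
      intro a1 a2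
      refine ⟨le_rfl, ?_⟩
      rw [hlo, hhi]
      linarith [hAB a1 a2]
    · intro x hx a1 a2
      rw [hR1] at hx
      exact (hx a1 a2).1
  have key2 : ∀ u ∈ probSimplex A2, V2 rstar R2 π1 u = bil Bmat π1 u := by
    intro u hu
    have hB : -rstar + -rhi = Bmat := by
      ext a1 a2
      rw [Matrix.add_apply, Matrix.neg_apply, Matrix.neg_apply, hstar, hhi]
      ring
    rw [V2, sInf_bil_eq_of_isLeast (-rstar) (-rhi) ?_ ?_ hπ1.1 hu.1, hB]
    · rw [hR2, Set.neg_mem_neg, hR1]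
      intro a1 a2
      refine ⟨?_, le_rfl⟩
      rw [hlo, hhi]
      linarith [hAB a1 a2]
    · intro x hx a1 a2
      rw [hR2, Set.mem_neg, hR1] at hx
      have h := (hx a1 a2).2
      rw [Matrix.neg_apply] at h ⊢
      linarith
  have set1 : {t : ℝ | ∃ u ∈ probSimplex A1, t = V1 rstar R1 u π2}
      = {t : ℝ | ∃ u ∈ probSimplex A1, t = bil Amat u π2} := by
    ext t
    exact exists_congr fun u => and_congr_right fun hu => by rw [key1 u hu]
  have set2 : {t : ℝ | ∃ u ∈ probSimplex A2, t = V2 rstar R2 π1 u}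
      = {t : ℝ | ∃ u ∈ probSimplex A2, t = bil Bmat π1 u} := by
    ext t
    exact exists_congr fun u => and_congr_right fun hu => by rw [key2 u hu]
  rw [set1, set2, key1 π1 hπ1, key2 π2 hπ2]
  exact ⟨rfl, Iff.rfl⟩
end

section
/- Let 𝒮 and 𝒜 be finite sets, p, q ∈ [1,∞], β ≥ 0, P* ∈ ℝ^{𝒮×𝒜}, v ∈ ℝ^𝒮 and μ ∈ Δ(𝒜). For the operator-norm ball 𝒫 = {P ∈ ℝ^{𝒮×𝒜} : ‖P − P*‖_{p→q} ≤ β}, the support function satisfies σ_𝒫(−vμᵀ) = ⟨P*, −vμᵀ⟩ + β ‖v‖_{q*} ‖μ‖_p, where vμᵀ ∈ ℝ^{𝒮×𝒜} has entries v(s)μ(a). -/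
/-!
Write `P = P* + B`. Then `⟨P, -vμᵀ⟩ = ⟨P*, -vμᵀ⟩ - v · (Bμ)`, so the claim is that `-v · (Bμ)` has
maximum `β ‖v‖_{q*} ‖μ‖_p` over `‖B‖_{p→q} ≤ β`.

The upper bound is Hölder's inequality (`sum_mul_le_lpNorm`) followed by `‖Bμ‖_q ≤ β ‖μ‖_p`
(`lpNorm_mulVec_le`); the latter needs the supremum defining the operator norm to be over a
bounded set, which holds because linear maps between finite-dimensional spaces are bounded.

The maximum is attained at the rank-one matrix `B = β u fᵀ`, where `u` is a vector with
`‖u‖_q ≤ 1` and `u · (-v) = ‖v‖_{q*}` (`exists_norming_vector`, the equality case of Hölder), and `f`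
is a Hahn–Banach functional of norm at most one on `ℓ_p` with `f(μ) = ‖μ‖_p`.
-/

open scoped BigOperators ENNReal

/-- The vector `ℓ_p` norm on `ℝ^n`, for `p ∈ [1,∞]`. -/
noncomputable def lpNorm (p : ℝ≥0∞) {n : Type*} [Fintype n] (x : n → ℝ) : ℝ :=
  if p = ∞ then ⨆ i, |x i| else (∑ i, |x i| ^ p.toReal) ^ (1 / p.toReal)

/-- The `ℓ_p → ℓ_q` operator norm of a real matrix:
`‖B‖_{p→q} = sup {‖Bx‖_q : ‖x‖_p = 1}`. -/
noncomputable def opNorm (p q : ℝ≥0∞) {m n : Type*} [Fintype m] [Fintype n]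
    (B : Matrix m n ℝ) : ℝ :=
  sSup {c : ℝ | ∃ x : n → ℝ, lpNorm p x = 1 ∧ c = lpNorm q (B.mulVec x)}

/-- The explicit `lpNorm` is the norm of Mathlib's `PiLp` space. -/
lemma lpNorm_eq_norm_toLp {n : Type*} [Fintype n] (p : ℝ≥0∞) [hp : Fact (1 ≤ p)] (x : n → ℝ) :
    lpNorm p x = ‖WithLp.toLp p x‖ := by
  unfold lpNorm
  split_ifs with h
  · subst h
    simp [PiLp.norm_eq_ciSup, Real.norm_eq_abs]
  · have h0 : 0 < p.toReal := ENNReal.toReal_pos (zero_lt_one.trans_le hp.out).ne' h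
    simp [PiLp.norm_eq_sum h0, Real.norm_eq_abs]

lemma lpNorm_nonneg' {n : Type*} [Fintype n] (p : ℝ≥0∞) [Fact (1 ≤ p)] (x : n → ℝ) :
    0 ≤ lpNorm p x := by
  rw [lpNorm_eq_norm_toLp]; exact norm_nonneg _

lemma lpNorm_smul {n : Type*} [Fintype n] (p : ℝ≥0∞) [Fact (1 ≤ p)] (c : ℝ) (x : n → ℝ) :
    lpNorm p (c • x) = |c| * lpNorm p x := by
  simp [lpNorm_eq_norm_toLp, norm_smul]

lemma lpNorm_one_eq {n : Type*} [Fintype n] (x : n → ℝ) : lpNorm 1 x = ∑ i, |x i| := by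
  simp [lpNorm]

lemma lpNorm_top_eq {n : Type*} [Fintype n] (x : n → ℝ) : lpNorm ∞ x = ⨆ i, |x i| := by
  simp [lpNorm]

lemma abs_le_lpNorm_top {n : Type*} [Fintype n] (x : n → ℝ) (i : n) : |x i| ≤ lpNorm ∞ x := by
  rw [lpNorm_top_eq]
  exact le_ciSup (f := fun i => |x i|) (Set.finite_range _).bddAbove i

lemma sum_mul_le_lpNorm_one_top {n : Type*} [Fintype n] (u v : n → ℝ) :
    ∑ i, u i * v i ≤ lpNorm 1 u * lpNorm ∞ v := by
  rw [lpNorm_one_eq, Finset.sum_mul]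
  refine Finset.sum_le_sum fun i _ => (le_abs_self _).trans ?_
  rw [abs_mul]
  exact mul_le_mul_of_nonneg_left (abs_le_lpNorm_top v i) (abs_nonneg _)

/-- Hölder's inequality, including the endpoint exponents. -/
lemma sum_mul_le_lpNorm {n : Type*} [Fintype n] (q r : ℝ≥0∞) [ENNReal.HolderConjugate q r]
    (u v : n → ℝ) : ∑ i, u i * v i ≤ lpNorm q u * lpNorm r v := by
  by_cases hr : r = ∞
  · obtain rfl : q = 1 := (ENNReal.HolderConjugate.eq_top_iff_eq_one r q).1 hr
    subst hr
    exact sum_mul_le_lpNorm_one_top u v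
  by_cases hq : q = ∞
  · obtain rfl : r = 1 := (ENNReal.HolderConjugate.eq_top_iff_eq_one q r).1 hq
    subst hq
    simpa only [mul_comm] using sum_mul_le_lpNorm_one_top v u
  have h := ENNReal.HolderConjugate.toReal_of_ne_top hq hr
  simpa [lpNorm, hq, hr] using Real.inner_le_Lp_mul_Lq Finset.univ u v h

/-- The equality case of Hölder's inequality: every `v` is normed by a vector in the unit ball of
the conjugate space. -/
lemma exists_norming_vector {n : Type*} [Fintype n] (q r : ℝ≥0∞) [ENNReal.HolderConjugate q r]
    (v : n → ℝ) : ∃ u : n → ℝ, lpNorm q u ≤ 1 ∧ ∑ i, u i * v i = lpNorm r v := by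
  classical
  have hsign : ∀ x : ℝ, |(SignType.sign x : ℝ)| ≤ 1 := fun x => by
    rcases lt_trichotomy x 0 with h | h | h <;> simp [h]
  by_cases hr : r = ∞
  -- `q = 1`: a signed unit vector at a coordinate of maximal absolute value
  · obtain rfl : q = 1 := (ENNReal.HolderConjugate.eq_top_iff_eq_one r q).1 hr
    subst hr
    rcases isEmpty_or_nonempty n with hn | hn
    · exact ⟨0, by simp [lpNorm_one_eq], by simp [lpNorm_top_eq]⟩
    obtain ⟨i, hi⟩ := exists_eq_ciSup_of_finite (f := fun i => |v i|)
    refine ⟨Pi.single i (SignType.sign (v i) : ℝ), ?_, ?_⟩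
    · rw [lpNorm_one_eq, Finset.sum_eq_single i]
      · simpa using hsign (v i)
      · intro j _ hj; simp [hj]
      · simp
    · rw [lpNorm_top_eq, ← hi, Finset.sum_eq_single i]
      · simp
      · intro j _ hj; simp [hj]
      · simp
  by_cases hq : q = ∞
  -- `q = ∞`: the vector of signs
  · obtain rfl : r = 1 := (ENNReal.HolderConjugate.eq_top_iff_eq_one q r).1 hq
    subst hq
    refine ⟨fun i => (SignType.sign (v i) : ℝ), ?_, ?_⟩
    · rw [lpNorm_top_eq]
      exact Real.iSup_le (fun i => hsign _) zero_le_one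
    · simp [lpNorm_one_eq]
  have h := (ENNReal.HolderConjugate.toReal_of_ne_top hq hr).symm
  obtain ⟨⟨g, hg, hgv⟩, -⟩ := NNReal.isGreatest_Lp Finset.univ (fun i => Real.nnabs (v i)) h
  refine ⟨fun i => (SignType.sign (v i) : ℝ) * g i, ?_, ?_⟩
  · have hg' : ∑ i, (g i : ℝ) ^ q.toReal ≤ 1 := by exact_mod_cast hg
    simp only [lpNorm, hq, if_false]
    refine Real.rpow_le_one (Finset.sum_nonneg fun i _ => by positivity) ?_ h.symm.one_div_pos.le
    refine (Finset.sum_le_sum fun i _ => ?_).trans hg'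
    refine Real.rpow_le_rpow (abs_nonneg _) ?_ h.symm.nonneg
    rw [abs_mul, NNReal.abs_eq]
    exact mul_le_of_le_one_left (g i).2 (hsign _)
  · have hgv' := congrArg ((↑) : NNReal → ℝ) hgv
    simp only [NNReal.coe_sum, NNReal.coe_mul, NNReal.coe_rpow, Real.coe_nnabs] at hgv'
    simp only [lpNorm, hr, if_false]
    rw [← hgv']
    refine Finset.sum_congr rfl fun i _ => ?_
    rw [← sign_mul_self]; ring

lemma bddAbove_opNorm_set {m n : Type*} [Fintype m] [Fintype n] (p q : ℝ≥0∞)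
    [Fact (1 ≤ p)] [Fact (1 ≤ q)] (B : Matrix m n ℝ) :
    BddAbove {c : ℝ | ∃ x : n → ℝ, lpNorm p x = 1 ∧ c = lpNorm q (B.mulVec x)} := by
  let L : PiLp p (fun _ : n => ℝ) →ₗ[ℝ] PiLp q (fun _ : m => ℝ) :=
    (WithLp.linearEquiv q ℝ (m → ℝ)).symm.toLinearMap ∘ₗ B.mulVecLin ∘ₗ
      (WithLp.linearEquiv p ℝ (n → ℝ)).toLinearMap
  refine ⟨‖LinearMap.toContinuousLinearMap L‖, ?_⟩
  rintro c ⟨x, hx, rfl⟩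
  have h := (LinearMap.toContinuousLinearMap L).le_opNorm (WithLp.toLp p x)
  rw [lpNorm_eq_norm_toLp] at hx ⊢
  rw [hx, mul_one] at h
  exact h

lemma lpNorm_mulVec_le {m n : Type*} [Fintype m] [Fintype n] (p q : ℝ≥0∞)
    [Fact (1 ≤ p)] [Fact (1 ≤ q)] (B : Matrix m n ℝ) (x : n → ℝ) :
    lpNorm q (B.mulVec x) ≤ opNorm p q B * lpNorm p x := by
  rcases (lpNorm_nonneg' p x).eq_or_lt with h0 | hpos
  · have hx : x = 0 := by
      rw [lpNorm_eq_norm_toLp] at h0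
      simpa using h0.symm
    subst hx
    simp [lpNorm_eq_norm_toLp]
  · have hunit : lpNorm p ((lpNorm p x)⁻¹ • x) = 1 := by
      rw [lpNorm_smul, abs_of_pos (inv_pos.2 hpos), inv_mul_cancel₀ hpos.ne']
    have h := le_csSup (bddAbove_opNorm_set p q B) ⟨_, hunit, rfl⟩
    rw [Matrix.mulVec_smul, lpNorm_smul, abs_of_pos (inv_pos.2 hpos), inv_mul_le_iff₀ hpos,
      mul_comm] at h
    exact h

/-- Pairing a matrix with `-vμᵀ` is pairing `-v` with its action on `μ`. -/
lemma sum_sum_mul_neg {S A : Type*} [Fintype S] [Fintype A] (B : Matrix S A ℝ) (v : S → ℝ)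
    (μ : A → ℝ) : ∑ s, ∑ a, B s a * (-v s * μ a) = ∑ s, B.mulVec μ s * (-v) s := by
  refine Finset.sum_congr rfl fun s _ => ?_
  simp only [Matrix.mulVec, dotProduct, Finset.sum_mul, Pi.neg_apply]
  exact Finset.sum_congr rfl fun a _ => by ring

/-- Corollary (ball-constrained transition uncertainty): for the
operator-norm ball `𝒫 = {P : ‖P − P*‖_{p→q} ≤ β}`, `v ∈ ℝ^𝒮` and
`μ ∈ Δ(𝒜)`, the support function satisfies
`σ_𝒫(−vμᵀ) = ⟨P*, −vμᵀ⟩ + β ‖v‖_{q*} ‖μ‖_p`. -/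
theorem ball_transition_support {S A : Type*} [Fintype S] [Fintype A]
    (p q qstar : ℝ≥0∞) (hp : 1 ≤ p) (hq : 1 ≤ q)
    (hconj : 1 / q + 1 / qstar = 1)
    (β : ℝ) (hβ : 0 ≤ β) (Pstar : Matrix S A ℝ)
    (v : S → ℝ) (μ : A → ℝ) (hμ : μ ∈ probSimplex A) :
    sSup {t : ℝ | ∃ P : Matrix S A ℝ, opNorm p q (P - Pstar) ≤ β ∧
        t = ∑ s, ∑ a, P s a * (-v s * μ a)}
      = (∑ s, ∑ a, Pstar s a * (-v s * μ a)) + β * lpNorm qstar v * lpNorm p μ := by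
  have : Fact (1 ≤ p) := ⟨hp⟩
  have : Fact (1 ≤ q) := ⟨hq⟩
  have hqr : ENNReal.HolderConjugate q qstar :=
    ENNReal.holderConjugate_iff.2 (by simpa only [one_div] using hconj)
  have : Fact (1 ≤ qstar) := ⟨ENNReal.HolderConjugate.one_le qstar q⟩
  have hneg : lpNorm qstar (-v) = lpNorm qstar v := by
    simpa using lpNorm_smul qstar (-1) v
  refine IsGreatest.csSup_eq ⟨?_, ?_⟩
  · obtain ⟨u, hu, huv⟩ := exists_norming_vector q qstar (-v)
    obtain ⟨f, hf, hfμ⟩ := exists_dual_vector'' ℝ (WithLp.toLp p μ)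
    classical
    -- the matrix of `x ↦ β f(x) u`, with `u` norming `-v`
    let B : Matrix S A ℝ := fun s a => β * u s * f (WithLp.toLp p (Pi.single a 1))
    have hB : ∀ x : A → ℝ, B.mulVec x = (β * f (WithLp.toLp p x)) • u := by
      intro x
      have hx : WithLp.toLp p x = ∑ a, x a • WithLp.toLp p (Pi.single a (1 : ℝ)) := by
        rw [← (WithLp.linearEquiv p ℝ (A → ℝ)).injective.eq_iff]
        simp only [map_sum, map_smul, WithLp.linearEquiv_apply]
        exact pi_eq_sum_univ' x
      ext s
      rw [hx, map_sum]
      simp only [B, Matrix.mulVec, dotProduct, map_smul, smul_eq_mul, Pi.smul_apply,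
        Finset.mul_sum, Finset.sum_mul]
      exact Finset.sum_congr rfl fun a _ => by ring
    refine ⟨Pstar + B, ?_, ?_⟩
    · rw [add_sub_cancel_left]
      refine Real.sSup_le ?_ hβ
      rintro c ⟨x, hx, rfl⟩
      have hfx : |f (WithLp.toLp p x)| ≤ 1 := by
        have h := f.le_of_opNorm_le hf (WithLp.toLp p x)
        rwa [← lpNorm_eq_norm_toLp, hx, mul_one, Real.norm_eq_abs] at h
      rw [hB, lpNorm_smul, abs_mul, abs_of_nonneg hβ, mul_assoc]
      exact mul_le_of_le_one_right hβ (mul_le_one₀ hfx (lpNorm_nonneg' q u) hu)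
    · have hBv : ∑ s, ∑ a, B s a * (-v s * μ a) = β * lpNorm qstar v * lpNorm p μ := by
        rw [sum_sum_mul_neg, hB, hfμ, lpNorm_eq_norm_toLp p μ, ← hneg, ← huv]
        simp only [Pi.smul_apply, smul_eq_mul, Finset.mul_sum, Finset.sum_mul,
          RCLike.ofReal_real_eq_id, id]
        exact Finset.sum_congr rfl fun s _ => by ring
      rw [← hBv]
      simp only [Matrix.add_apply, add_mul, Finset.sum_add_distrib]
  · rintro t ⟨P, hP, rfl⟩
    have hsplit : ∑ s, ∑ a, P s a * (-v s * μ a) = ∑ s, ∑ a, Pstar s a * (-v s * μ a) +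
        ∑ s, ∑ a, (P - Pstar) s a * (-v s * μ a) := by
      simp only [← Finset.sum_add_distrib, ← add_mul, Matrix.sub_apply, add_sub_cancel]
    rw [hsplit, sum_sum_mul_neg (P - Pstar)]
    gcongr
    calc ∑ s, (P - Pstar).mulVec μ s * (-v) s
        ≤ lpNorm q ((P - Pstar).mulVec μ) * lpNorm qstar (-v) := sum_mul_le_lpNorm q qstar _ _
      _ ≤ (β * lpNorm p μ) * lpNorm qstar v := by
          rw [hneg]
          refine mul_le_mul_of_nonneg_right ?_ (lpNorm_nonneg' _ _)
          exact (lpNorm_mulVec_le p q _ μ).trans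
            (mul_le_mul_of_nonneg_right hP (lpNorm_nonneg' _ _))
      _ = β * lpNorm qstar v * lpNorm p μ := by ring
end

section
/- Let 𝒮 be a finite set, let P* ∈ Δ(𝒮) have full support (P*(s) > 0 for all s), let β > 0 and v ∈ ℝ^𝒮. Then the Kullback–Leibler-constrained support function admits the dual representation sup{ Σ_s P(s)(−v(s)) : P ∈ Δ(𝒮), KL(P‖P*) ≤ β } = inf_{λ > 0} { βλ + λ · log( Σ_s P*(s) exp(−v(s)/λ) ) }. -/
open scoped BigOperators

/-- The Kullback–Leibler divergence `KL(P‖Q) = Σ_s P(s) log (P(s)/Q(s))`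
between finitely supported distributions.  (With `Real.log 0 = 0` in
Mathlib, the convention `0 · log 0 = 0` holds automatically.) -/
noncomputable def klDiv {S : Type*} [Fintype S] (P Q : S → ℝ) : ℝ :=
  ∑ s, P s * Real.log (P s / Q s)

/-- The partition function `Σ_s Q(s) exp (g(s))`. -/
noncomputable def partitionFn {S : Type*} [Fintype S] (Q g : S → ℝ) : ℝ :=
  ∑ s, Q s * Real.exp (g s)

/-- The exponential tilt of `Q` by `g`, the distribution proportional to `Q(s) exp (g(s))`. -/
noncomputable def expTilt {S : Type*} [Fintype S] (Q g : S → ℝ) (s : S) : ℝ :=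
  Q s * Real.exp (g s) / partitionFn Q g

lemma partitionFn_pos {S : Type*} [Fintype S] {Q : S → ℝ} (hQ : Q ∈ probSimplex S)
    (hpos : ∀ s, 0 < Q s) (g : S → ℝ) : 0 < partitionFn Q g := by
  have hne : (Finset.univ : Finset S).Nonempty := by
    by_contra h
    have h1 := hQ.2
    rw [Finset.not_nonempty_iff_eq_empty.mp h] at h1
    simp at h1
  exact Finset.sum_pos (fun s _ => mul_pos (hpos s) (Real.exp_pos _)) hne

lemma expTilt_mem {S : Type*} [Fintype S] {Q : S → ℝ} (hQ : Q ∈ probSimplex S)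
    (hpos : ∀ s, 0 < Q s) (g : S → ℝ) : expTilt Q g ∈ probSimplex S := by
  have hZ := partitionFn_pos hQ hpos g
  refine ⟨fun s => ?_, ?_⟩
  · exact div_nonneg (mul_nonneg (hpos s).le (Real.exp_pos _).le) hZ.le
  · simp only [expTilt]
    rw [← Finset.sum_div]
    exact div_self (ne_of_gt hZ)

/-- The Donsker–Varadhan inequality on a finite set. -/
lemma gibbs_variational {S : Type*} [Fintype S] {P Q : S → ℝ} (hQ : Q ∈ probSimplex S)
    (hpos : ∀ s, 0 < Q s) (hP : P ∈ probSimplex S) (g : S → ℝ) :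
    ∑ s, P s * g s ≤ klDiv P Q + Real.log (partitionFn Q g) := by
  have hZ := partitionFn_pos hQ hpos g
  -- `log x ≤ x - 1` at `x = expTilt Q g s / P s`, multiplied by `P s`
  have key : ∀ s, P s * g s - P s * Real.log (P s / Q s) - P s * Real.log (partitionFn Q g)
      ≤ expTilt Q g s - P s := by
    intro s
    rcases (hP.1 s).eq_or_lt with h | h
    · rw [← h]
      simpa using (expTilt_mem hQ hpos g).1 s
    · have hq := hpos s
      have h1 := Real.log_le_sub_one_of_pos
        (x := Q s * Real.exp (g s) / partitionFn Q g / P s) (by positivity)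
      rw [Real.log_div (by positivity) h.ne', Real.log_div (by positivity) hZ.ne',
        Real.log_mul hq.ne' (Real.exp_pos _).ne', Real.log_exp] at h1
      rw [Real.log_div h.ne' hq.ne']
      have h2 := mul_le_mul_of_nonneg_left h1 h.le
      have h3 : P s * (Q s * Real.exp (g s) / partitionFn Q g / P s - 1)
          = expTilt Q g s - P s := by
        rw [expTilt]
        field_simp
      rw [h3] at h2
      linarith
  have hs := Finset.sum_le_sum fun s (_ : s ∈ Finset.univ) => key s
  simp only [Finset.sum_sub_distrib, ← Finset.sum_mul] at hs
  rw [hP.2, (expTilt_mem hQ hpos g).2] at hs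
  unfold klDiv
  linarith

/-- Equality in Donsker–Varadhan at the tilted distribution. -/
lemma klDiv_expTilt {S : Type*} [Fintype S] {Q : S → ℝ} (hQ : Q ∈ probSimplex S)
    (hpos : ∀ s, 0 < Q s) (g : S → ℝ) :
    klDiv (expTilt Q g) Q = ∑ s, expTilt Q g s * g s - Real.log (partitionFn Q g) := by
  have hZ := partitionFn_pos hQ hpos g
  have h : ∀ s, Real.log (expTilt Q g s / Q s) = g s - Real.log (partitionFn Q g) := by
    intro s
    have hq := hpos s
    have : expTilt Q g s / Q s = Real.exp (g s) / partitionFn Q g := by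
      rw [expTilt]
      field_simp
    rw [this, Real.log_div (Real.exp_pos _).ne' hZ.ne', Real.log_exp]
  simp only [klDiv, h, mul_sub, Finset.sum_sub_distrib, ← Finset.sum_mul]
  rw [(expTilt_mem hQ hpos g).2, one_mul]

lemma continuous_klDiv_expTilt {S : Type*} [Fintype S] {Q : S → ℝ} (hQ : Q ∈ probSimplex S)
    (hpos : ∀ s, 0 < Q s) (w : S → ℝ) :
    Continuous fun θ : ℝ => klDiv (expTilt Q fun s => θ * w s) Q := by
  simp only [klDiv_expTilt hQ hpos]
  have hZ : ∀ θ : ℝ, partitionFn Q (fun s => θ * w s) ≠ 0 :=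
    fun θ => (partitionFn_pos hQ hpos _).ne'
  have hc : Continuous fun θ : ℝ => partitionFn Q fun s => θ * w s := by
    unfold partitionFn
    fun_prop
  refine Continuous.sub (continuous_finsetSum _ fun s _ => ?_) (hc.log hZ)
  refine Continuous.mul ?_ (by fun_prop)
  unfold expTilt
  exact Continuous.div (by fun_prop) hc hZ

/-- A tilt that is feasible and whose duality gap `(β - KL) / θ` is at most `ε`. -/
lemma exists_good_tilt {S : Type*} [Fintype S] {Q : S → ℝ} (hQ : Q ∈ probSimplex S)
    (hpos : ∀ s, 0 < Q s) (w : S → ℝ) {β ε : ℝ} (hβ : 0 < β) (hε : 0 < ε) :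
    ∃ θ : ℝ, 0 < θ ∧ klDiv (expTilt Q fun s => θ * w s) Q ≤ β ∧
      β - klDiv (expTilt Q fun s => θ * w s) Q ≤ θ * ε := by
  have hθ : 0 < β / ε := div_pos hβ hε
  have hsum := hQ.2
  by_cases h : klDiv (expTilt Q fun s => β / ε * w s) Q ≤ β
  · refine ⟨β / ε, hθ, h, ?_⟩
    have h0 := gibbs_variational hQ hpos (expTilt_mem hQ hpos fun s => β / ε * w s) 0
    simp [partitionFn, hsum] at h0
    rw [div_mul_cancel₀ _ hε.ne']
    linarith
  · have h0 : klDiv (expTilt Q fun s => (0 : ℝ) * w s) Q = 0 := by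
      rw [klDiv_expTilt hQ hpos]
      simp [partitionFn, hsum]
    obtain ⟨θ, hmem, hk⟩ := intermediate_value_Icc hθ.le
      (continuous_klDiv_expTilt hQ hpos w).continuousOn
      (show β ∈ Set.Icc _ _ from ⟨h0.le.trans hβ.le, (not_le.mp h).le⟩)
    simp only at hk
    have hpos' : 0 < θ := by
      rcases hmem.1.eq_or_lt with h1 | h1
      · rw [← h1, h0] at hk
        exact absurd hk hβ.ne
      · exact h1
    refine ⟨θ, hpos', hk.le, ?_⟩
    rw [hk, sub_self]
    positivity

/-- The KL-constrained support function admits the dual representation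
`sup {Σ_s P(s)(−v(s)) : P ∈ Δ(𝒮), KL(P‖P*) ≤ β}
  = inf_{λ > 0} {βλ + λ log (Σ_s P*(s) exp (−v(s)/λ))}`. -/
theorem kl_support_dual {S : Type*} [Fintype S]
    (Pstar : S → ℝ) (hPs : Pstar ∈ probSimplex S) (hpos : ∀ s, 0 < Pstar s)
    (β : ℝ) (hβ : 0 < β) (v : S → ℝ) :
    sSup {t : ℝ | ∃ P : S → ℝ, P ∈ probSimplex S ∧ klDiv P Pstar ≤ β ∧
        t = ∑ s, P s * (-v s)}
      = sInf {t : ℝ | ∃ lam : ℝ, 0 < lam ∧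
          t = β * lam + lam * Real.log (∑ s, Pstar s * Real.exp (-v s / lam))} := by
  have weak : ∀ P ∈ probSimplex S, klDiv P Pstar ≤ β → ∀ lam : ℝ, 0 < lam →
      ∑ s, P s * (-v s)
        ≤ β * lam + lam * Real.log (∑ s, Pstar s * Real.exp (-v s / lam)) := by
    intro P hP hk lam hl
    have h := gibbs_variational hPs hpos hP (fun s => -v s / lam)
    have h1 : ∑ s, P s * (-v s) = lam * ∑ s, P s * (-v s / lam) := by
      rw [Finset.mul_sum]
      refine Finset.sum_congr rfl fun s _ => ?_
      field_simp
    unfold partitionFn at h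
    rw [h1]
    nlinarith [mul_le_mul_of_nonneg_left h hl.le, mul_le_mul_of_nonneg_left hk hl.le]
  obtain ⟨θ₁, -, hk₁, -⟩ := exists_good_tilt hPs hpos (fun s => -v s) hβ one_pos
  have hmem₁ := expTilt_mem hPs hpos fun s => θ₁ * -v s
  apply le_antisymm
  · refine csSup_le ⟨_, _, hmem₁, hk₁, rfl⟩ ?_
    rintro _ ⟨P, hP, hk, rfl⟩
    refine le_csInf ⟨_, 1, one_pos, rfl⟩ ?_
    rintro _ ⟨lam, hl, rfl⟩
    exact weak P hP hk lam hl
  · refine le_of_forall_pos_le_add fun ε hε => ?_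
    obtain ⟨θ, hθ, hk, hgap⟩ := exists_good_tilt hPs hpos (fun s => -v s) hβ hε
    have hmem := expTilt_mem hPs hpos fun s => θ * -v s
    set P := expTilt Pstar fun s => θ * -v s with hPdef
    have hinf : sInf {t : ℝ | ∃ lam : ℝ, 0 < lam ∧
          t = β * lam + lam * Real.log (∑ s, Pstar s * Real.exp (-v s / lam))}
        ≤ β * θ⁻¹ + θ⁻¹ * Real.log (∑ s, Pstar s * Real.exp (-v s / θ⁻¹)) := by
      refine csInf_le ⟨∑ s, P s * (-v s), ?_⟩ ⟨θ⁻¹, inv_pos.mpr hθ, rfl⟩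
      rintro _ ⟨lam, hl, rfl⟩
      exact weak P hmem hk lam hl
    have hsup : ∑ s, P s * (-v s) ≤ sSup {t : ℝ | ∃ P : S → ℝ, P ∈ probSimplex S ∧
        klDiv P Pstar ≤ β ∧ t = ∑ s, P s * (-v s)} := by
      refine le_csSup
        ⟨β * 1 + 1 * Real.log (∑ s, Pstar s * Real.exp (-v s / 1)), ?_⟩ ⟨P, hmem, hk, rfl⟩
      rintro _ ⟨P', hP', hk', rfl⟩
      exact weak P' hP' hk' 1 one_pos
    have heq := klDiv_expTilt hPs hpos fun s => θ * -v s
    rw [← hPdef] at heq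
    have h1 : ∑ s, P s * (θ * -v s) = θ * ∑ s, P s * (-v s) := by
      rw [Finset.mul_sum]
      exact Finset.sum_congr rfl fun s _ => by ring
    have h2 : ∑ s, Pstar s * Real.exp (-v s / θ⁻¹)
        = partitionFn Pstar fun s => θ * -v s := by
      refine Finset.sum_congr rfl fun s _ => ?_
      rw [div_inv_eq_mul, mul_comm (-v s)]
    have h3 : β * θ⁻¹ + θ⁻¹ * Real.log (∑ s, Pstar s * Real.exp (-v s / θ⁻¹))
        ≤ ∑ s, P s * (-v s) + ε := by
      rw [h2, mul_comm β, ← mul_add, inv_mul_le_iff₀ hθ]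
      linarith
    linarith
end

section
/- Consider an N-player robust matrix game with policy-dependent uncertainty sets {ℛ_i(π)} satisfying: each ℛ_i(π) ⊆ ℝ^𝒜 is nonempty, closed and convex; (i) there exists L ∈ ℝ such that Σ_a p_π(a)(r*_i(a)+x(a)) ≥ L for every π ∈ Π and x ∈ ℛ_i(π); (ii) the map π ↦ σ_{ℛ_i(π)}(−π_iπ_{-i}ᵀ) is continuous at every point of the boundary of Π; (iii) the set-valued map π ↦ ℛ_i(π) is continuous with respect to the Hausdorff distance induced by the ℓ∞ norm at every π in the interior of Π, and sup_{x∈ℛ_i(π)} ‖x‖_∞ < ∞ for every π in the interior of Π. Then for each player i, the robust value function F_i(π) = inf_{x∈ℛ_i(π)} Σ_a p_π(a)(r*_i(a)+x(a)) is continuous on Π. -/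
/-!
The payoff against `x ∈ ℛ_i(π)` splits as `Σ_a p_π(a) r*_i(a) + Σ_a p_π(a) x(a)`, so the robust value
equals the nominal value (a polynomial in `π`) minus the support function at `-p_π`
(`robustValue_eq_sub`). Hence it suffices that the support function is continuous on `Π`. On the
boundary this is assumed. At an interior point `π`, all nearby policies are interior too, so their
uncertainty sets are bounded and the Hausdorff distance to `ℛ_i(π)` is a true (finite) distance: every
point of one set is `η`-close to a point of the other. Since `p_π'` has total mass one, replacing a
point of one set by a close point of the other, and `p_π'` by `p_π`, changes the linear functional by
at most `η + M Σ_a |p_π'(a) - p_π(a)|`, where `M` bounds `ℛ_i(π)` (`abs_sum_sub_sum_le`).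
-/

open scoped BigOperators

/-- `p_π(a) = ∏_j π_j(a_j)`, the probability of joint action `a` under the
product joint policy `π`. -/
noncomputable def jointProb {N : ℕ} {A : Fin N → Type*} [∀ i, Fintype (A i)]
    (π : (j : Fin N) → A j → ℝ) (a : (j : Fin N) → A j) : ℝ :=
  ∏ j, π j (a j)

/-- Player `i`'s robust value
`V_i(π) = inf_{x ∈ ℛ_i(π)} Σ_a p_π(a) (r*_i(a) + x(a))`. -/
noncomputable def robustValue {N : ℕ} {A : Fin N → Type*} [∀ i, Fintype (A i)]
    (rstar : (i : Fin N) → ((j : Fin N) → A j) → ℝ)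
    (R : (i : Fin N) → ((j : Fin N) → A j → ℝ) → Set (((j : Fin N) → A j) → ℝ))
    (i : Fin N) (π : (j : Fin N) → A j → ℝ) : ℝ :=
  sInf {t : ℝ | ∃ x ∈ R i π,
    t = ∑ a : ((j : Fin N) → A j), jointProb π a * (rstar i a + x a)}

/-- The support function of `ℛ_i(π)` evaluated at `−π_i π_{-i}ᵀ`:
`σ_{ℛ_i(π)}(−π_i π_{-i}ᵀ) = sup_{x ∈ ℛ_i(π)} ⟨x, −π_i π_{-i}ᵀ⟩
  = sup_{x ∈ ℛ_i(π)} (−Σ_a p_π(a) x(a))`. -/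
noncomputable def suppAt {N : ℕ} {A : Fin N → Type*} [∀ i, Fintype (A i)]
    (R : (i : Fin N) → ((j : Fin N) → A j → ℝ) → Set (((j : Fin N) → A j) → ℝ))
    (i : Fin N) (π : (j : Fin N) → A j → ℝ) : ℝ :=
  sSup {t : ℝ | ∃ x ∈ R i π,
    t = -∑ a : ((j : Fin N) → A j), jointProb π a * x a}


section Helpers

variable {N : ℕ} {A : Fin N → Type*} [∀ i, Fintype (A i)]

lemma continuous_jointProb (a : (j : Fin N) → A j) :
    Continuous (fun π : (j : Fin N) → A j → ℝ => jointProb π a) := by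
  unfold jointProb
  fun_prop

lemma jointProb_nonneg {π : (j : Fin N) → A j → ℝ} (hπ : ∀ j, π j ∈ probSimplex (A j))
    (a : (j : Fin N) → A j) : 0 ≤ jointProb π a :=
  Finset.prod_nonneg fun j _ => (hπ j).1 (a j)

lemma sum_jointProb {π : (j : Fin N) → A j → ℝ} (hπ : ∀ j, π j ∈ probSimplex (A j)) :
    ∑ a, jointProb π a = 1 := by
  unfold jointProb
  rw [← Fintype.prod_sum]
  exact Finset.prod_eq_one fun j _ => (hπ j).2

/-- Two linear functionals `p`, `p'` take close values at `x`, `y` respectively when `x` is close to `y`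
and `p` to `p'`, for `p'` a probability vector and `x` bounded by `M`. The difference is split as
`p' (y - x) + (p' - p) x`. -/
lemma abs_sum_sub_sum_le {T : Type*} [Fintype T] {p p' x y : T → ℝ} {M η : ℝ}
    (hp' : ∀ a, 0 ≤ p' a) (hsum : ∑ a, p' a = 1) (hx : ∀ a, |x a| ≤ M)
    (hxy : ∀ a, |x a - y a| ≤ η) :
    |∑ a, p' a * y a - ∑ a, p a * x a| ≤ η + M * ∑ a, |p' a - p a| := by
  have h : ∑ a, (p' a * η + M * |p' a - p a|) = η + M * ∑ a, |p' a - p a| := by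
    rw [Finset.sum_add_distrib, ← Finset.sum_mul, hsum, one_mul, Finset.mul_sum]
  rw [← h, ← Finset.sum_sub_distrib]
  refine (Finset.abs_sum_le_sum_abs _ _).trans (Finset.sum_le_sum fun a _ => ?_)
  have e : p' a * y a - p a * x a = -(p' a * (x a - y a)) + x a * (p' a - p a) := by ring
  rw [e]
  refine (abs_add_le _ _).trans (add_le_add ?_ ?_)
  · rw [abs_neg, abs_mul, abs_of_nonneg (hp' a)]
    exact mul_le_mul_of_nonneg_left (hxy a) (hp' a)
  · rw [abs_mul]
    exact mul_le_mul_of_nonneg_right (hx a) (abs_nonneg _)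

/-- A lower bound on the payoffs makes the supremum defining the support function a genuine one. -/
lemma bddAbove_supp {rstar : (i : Fin N) → ((j : Fin N) → A j) → ℝ}
    {R : (i : Fin N) → ((j : Fin N) → A j → ℝ) → Set (((j : Fin N) → A j) → ℝ)}
    {i : Fin N} {π : (j : Fin N) → A j → ℝ} {L : ℝ}
    (hL : ∀ x ∈ R i π, L ≤ ∑ a, jointProb π a * (rstar i a + x a)) :
    BddAbove {t : ℝ | ∃ x ∈ R i π, t = -∑ a, jointProb π a * x a} := by
  refine ⟨∑ a, jointProb π a * rstar i a - L, ?_⟩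
  rintro t ⟨x, hx, rfl⟩
  have := hL x hx
  simp only [mul_add, Finset.sum_add_distrib] at this
  linarith

lemma robustValue_eq_sub {rstar : (i : Fin N) → ((j : Fin N) → A j) → ℝ}
    {R : (i : Fin N) → ((j : Fin N) → A j → ℝ) → Set (((j : Fin N) → A j) → ℝ)}
    {i : Fin N} {π : (j : Fin N) → A j → ℝ} {L : ℝ} (hne : (R i π).Nonempty)
    (hL : ∀ x ∈ R i π, L ≤ ∑ a, jointProb π a * (rstar i a + x a)) :
    robustValue rstar R i π = ∑ a, jointProb π a * rstar i a - suppAt R i π := by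
  have hb := bddAbove_supp hL
  obtain ⟨x₀, hx₀⟩ := hne
  apply le_antisymm
  · have : suppAt R i π ≤ ∑ a, jointProb π a * rstar i a - robustValue rstar R i π := by
      refine csSup_le ⟨_, x₀, hx₀, rfl⟩ ?_
      rintro t ⟨x, hx, rfl⟩
      have h : robustValue rstar R i π ≤ ∑ a, jointProb π a * (rstar i a + x a) := by
        refine csInf_le ⟨L, ?_⟩ ⟨x, hx, rfl⟩
        rintro t ⟨y, hy, rfl⟩
        exact hL y hy
      simp only [mul_add, Finset.sum_add_distrib] at h
      linarith
    linarith
  · refine le_csInf ⟨_, x₀, hx₀, rfl⟩ ?_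
    rintro t ⟨x, hx, rfl⟩
    have h : -∑ a, jointProb π a * x a ≤ suppAt R i π := le_csSup hb ⟨x, hx, rfl⟩
    simp only [mul_add, Finset.sum_add_distrib]
    linarith

lemma isOpen_pos : IsOpen {π : (j : Fin N) → A j → ℝ | ∀ j b, 0 < π j b} := by
  simp only [Set.ofPred_forall]
  exact isOpen_iInter_of_finite fun j => isOpen_iInter_of_finite fun b =>
    isOpen_lt continuous_const (by fun_prop)

lemma isBounded_of_abs_le {T : Type*} [Fintype T] {S : Set (T → ℝ)}
    (h : ∃ M : ℝ, ∀ x ∈ S, ∀ a, |x a| ≤ M) : Bornology.IsBounded S := by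
  obtain ⟨M, hM⟩ := h
  refine isBounded_iff_forall_norm_le.2 ⟨max M 0, fun x hx => ?_⟩
  exact (pi_norm_le_iff_of_nonneg (le_max_right _ _)).2 fun a => (hM x hx a).trans (le_max_left _ _)

end Helpers

/-- Lemma (continuity of the robust value function): for an N-player robust
matrix game with nonempty, closed, convex policy-dependent uncertainty sets
satisfying (i) a uniform lower bound on the payoffs, (ii) continuity of the
support-function regularizer at the boundary of `Π`, and (iii) ℓ∞-Hausdorff
continuity and boundedness of the uncertainty sets at interior points of
`Π`, each robust value function `F_i` is continuous on `Π` (stated here in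
ε-δ form with the sup (ℓ∞, i.e. product) metric on policy profiles). -/
theorem robust_value_continuous {N : ℕ} {A : Fin N → Type*} [∀ i, Fintype (A i)]
    (rstar : (i : Fin N) → ((j : Fin N) → A j) → ℝ)
    (R : (i : Fin N) → ((j : Fin N) → A j → ℝ) → Set (((j : Fin N) → A j) → ℝ))
    (hRne : ∀ (i : Fin N) (π : (j : Fin N) → A j → ℝ),
      (∀ j, π j ∈ probSimplex (A j)) → (R i π).Nonempty)
    (hRcl : ∀ (i : Fin N) (π : (j : Fin N) → A j → ℝ),
      (∀ j, π j ∈ probSimplex (A j)) → IsClosed (R i π))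
    (hRcv : ∀ (i : Fin N) (π : (j : Fin N) → A j → ℝ),
      (∀ j, π j ∈ probSimplex (A j)) → Convex ℝ (R i π))
    (hLB : ∃ L : ℝ, ∀ (i : Fin N) (π : (j : Fin N) → A j → ℝ),
      (∀ j, π j ∈ probSimplex (A j)) → ∀ x ∈ R i π,
        L ≤ ∑ a : ((j : Fin N) → A j), jointProb π a * (rstar i a + x a))
    (hbdry : ∀ (i : Fin N) (π : (j : Fin N) → A j → ℝ),
      (∀ j, π j ∈ probSimplex (A j)) → ¬ (∀ j b, 0 < π j b) →
      ∀ ε > (0:ℝ), ∃ δ > (0:ℝ), ∀ π' : (j : Fin N) → A j → ℝ,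
        (∀ j, π' j ∈ probSimplex (A j)) → dist π π' < δ →
          |suppAt R i π' - suppAt R i π| < ε)
    (hHcont : ∀ (i : Fin N) (π : (j : Fin N) → A j → ℝ),
      (∀ j, π j ∈ probSimplex (A j)) → (∀ j b, 0 < π j b) →
      ∀ ε > (0:ℝ), ∃ δ > (0:ℝ), ∀ π' : (j : Fin N) → A j → ℝ,
        (∀ j, π' j ∈ probSimplex (A j)) → dist π π' < δ →
          Metric.hausdorffDist (R i π) (R i π') < ε)
    (hbound : ∀ (i : Fin N) (π : (j : Fin N) → A j → ℝ),
      (∀ j, π j ∈ probSimplex (A j)) → (∀ j b, 0 < π j b) →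
      ∃ M : ℝ, ∀ x ∈ R i π, ∀ a : ((j : Fin N) → A j), |x a| ≤ M) :
    ∀ (i : Fin N) (π : (j : Fin N) → A j → ℝ),
      (∀ j, π j ∈ probSimplex (A j)) →
      ∀ ε > (0:ℝ), ∃ δ > (0:ℝ), ∀ π' : (j : Fin N) → A j → ℝ,
        (∀ j, π' j ∈ probSimplex (A j)) → dist π π' < δ →
          |robustValue rstar R i π' - robustValue rstar R i π| < ε := by
  obtain ⟨L, hL⟩ := hLB
  intro i π hπ ε hε
  -- It suffices to control the support function: the nominal value is continuous in the policy.
  suffices hsupp : ∀ ε > (0:ℝ), ∃ δ > (0:ℝ), ∀ π' : (j : Fin N) → A j → ℝ,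
      (∀ j, π' j ∈ probSimplex (A j)) → dist π π' < δ →
        |suppAt R i π' - suppAt R i π| < ε by
    obtain ⟨δ₁, hδ₁, h₁⟩ := hsupp (ε / 2) (half_pos hε)
    have hc : Continuous (fun π : (j : Fin N) → A j → ℝ => ∑ a, jointProb π a * rstar i a) :=
      continuous_finsetSum _ fun a _ => (continuous_jointProb a).mul continuous_const
    obtain ⟨δ₂, hδ₂, h₂⟩ := Metric.continuous_iff.1 hc π (ε / 2) (half_pos hε)
    refine ⟨min δ₁ δ₂, lt_min hδ₁ hδ₂, fun π' hπ' hd => ?_⟩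
    have e₁ := h₁ π' hπ' (hd.trans_le (min_le_left _ _))
    have e₂ := h₂ π' (by rw [dist_comm]; exact hd.trans_le (min_le_right _ _))
    rw [Real.dist_eq] at e₂
    rw [robustValue_eq_sub (hRne i π hπ) (hL i π hπ),
      robustValue_eq_sub (hRne i π' hπ') (hL i π' hπ')]
    rw [abs_lt] at *
    constructor <;> linarith [e₁.1, e₁.2, e₂.1, e₂.2]
  by_cases hpos : ∀ j b, 0 < π j b
  swap
  · exact hbdry i π hπ hpos
  intro ε hε
  obtain ⟨M, hM⟩ := hbound i π hπ hpos
  obtain ⟨δ₁, hδ₁, h₁⟩ := hHcont i π hπ hpos (ε / 3) (by positivity)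
  obtain ⟨δ₂, hδ₂, h₂⟩ := Metric.isOpen_iff.1 (isOpen_pos (A := A)) π hpos
  have hc : Continuous
      (fun π' : (j : Fin N) → A j → ℝ => M * ∑ a, |jointProb π' a - jointProb π a|) :=
    continuous_const.mul (continuous_finsetSum _ fun a _ =>
      ((continuous_jointProb a).sub continuous_const).abs)
  obtain ⟨δ₃, hδ₃, h₃⟩ := Metric.continuous_iff.1 hc π (ε / 3) (by positivity)
  refine ⟨min δ₁ (min δ₂ δ₃), by positivity, fun π' hπ' hd => ?_⟩
  obtain ⟨hd₁, hd'⟩ := lt_min_iff.1 hd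
  obtain ⟨hd₂, hd₃⟩ := lt_min_iff.1 hd'
  have hH := h₁ π' hπ' hd₁
  have hpos' : ∀ j b, 0 < π' j b := h₂ (by rwa [Metric.mem_ball, dist_comm])
  have hS := h₃ π' (by rwa [dist_comm])
  simp only [sub_self, abs_zero, Finset.sum_const_zero, mul_zero, Real.dist_eq, sub_zero] at hS
  have hS' := (abs_lt.1 hS).2
  -- Both sets are bounded and nonempty, so `hausdorffDist` is not the junk value `0`.
  have hfin : Metric.hausdorffEDist (R i π) (R i π') ≠ ⊤ :=
    Metric.hausdorffEDist_ne_top_of_nonempty_of_bounded (hRne i π hπ) (hRne i π' hπ')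
      (isBounded_of_abs_le ⟨M, hM⟩) (isBounded_of_abs_le (hbound i π' hπ' hpos'))
  have key : ∀ x ∈ R i π, ∀ y ∈ R i π', dist x y < ε / 3 →
      |∑ a, jointProb π' a * y a - ∑ a, jointProb π a * x a| ≤ 2 * (ε / 3) := by
    intro x hx y _ hxy
    have := abs_sum_sub_sum_le (p := jointProb π) (jointProb_nonneg hπ') (sum_jointProb hπ')
      (hM x hx) (fun a => (dist_le_pi_dist x y a).trans hxy.le)
    linarith
  have u₁ : suppAt R i π' ≤ suppAt R i π + 2 * (ε / 3) := by
    obtain ⟨y₀, hy₀⟩ := hRne i π' hπ'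
    refine csSup_le ⟨_, y₀, hy₀, rfl⟩ ?_
    rintro t ⟨y, hy, rfl⟩
    obtain ⟨x, hx, hxy⟩ := Metric.exists_dist_lt_of_hausdorffDist_lt' hy hH hfin
    have h : -∑ a, jointProb π a * x a ≤ suppAt R i π :=
      le_csSup (bddAbove_supp (hL i π hπ)) ⟨x, hx, rfl⟩
    linarith [(abs_le.1 (key x hx y hy hxy)).1]
  have u₂ : suppAt R i π ≤ suppAt R i π' + 2 * (ε / 3) := by
    obtain ⟨x₀, hx₀⟩ := hRne i π hπ
    refine csSup_le ⟨_, x₀, hx₀, rfl⟩ ?_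
    rintro t ⟨x, hx, rfl⟩
    obtain ⟨y, hy, hxy⟩ := Metric.exists_dist_lt_of_hausdorffDist_lt hx hH hfin
    have h : -∑ a, jointProb π' a * y a ≤ suppAt R i π' :=
      le_csSup (bddAbove_supp (hL i π' hπ')) ⟨y, hy, rfl⟩
    linarith [(abs_le.1 (key x hx y hy hxy)).2]
  rw [abs_lt]
  constructor <;> linarith
end
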